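/- Let α, β ∈ ℕ (nonnegative integers) with max{α, β} > 0, let δ be a real number with δ ≥ α + 1, and let t ∈ (0, π]. Then the series Σ_{n=0}^∞ (F_n^{(α,β),δ}(t)/h_n) P_n^{(α-1/2,β-1/2)}(1) converges, where h_n = 2^{-α-β+1} ∫_{-1}^1 [P_n^{(α-1/2,β-1/2)}(x)]² (1-x)^{α-1/2} (1+x)^{β-1/2} dx. (These are the terms of the Fourier–Jacobi expansion of θ ↦ (t-θ)_+^δ evaluated at θ = 0.) -/

import Mathlib

open MeasureTheory Real Set

/-- Generalized binomial coefficient `C(u, v) = Γ(u+1) / (Γ(v+1) Γ(u-v+1))`. -/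
noncomputable def genBinom (u v : ℝ) : ℝ :=
  Real.Gamma (u + 1) / (Real.Gamma (v + 1) * Real.Gamma (u - v + 1))

/-- Jacobi polynomial `P_n^{(a,b)}(x)`. -/
noncomputable def jacobiP (n : ℕ) (a b x : ℝ) : ℝ :=
  ∑ k ∈ Finset.range (n + 1),
    genBinom ((n : ℝ) + a) ((n : ℝ) - (k : ℝ)) * genBinom ((n : ℝ) + b) (k : ℝ) *
      ((x - 1) / 2) ^ k * ((x + 1) / 2) ^ (n - k)

/-- `F_n^{(α,β),δ}(t)`. -/
noncomputable def FJ (n : ℕ) (α β δ t : ℝ) : ℝ :=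
  ∫ θ in (0:ℝ)..t, (t - θ) ^ δ * jacobiP n (α - 1/2) (β - 1/2) (Real.cos θ) *
    (Real.sin (θ / 2)) ^ (2 * α) * (Real.cos (θ / 2)) ^ (2 * β)

/-- Normalization constant `h_n` of the Jacobi polynomials. -/
noncomputable def hJ (n : ℕ) (α β : ℝ) : ℝ :=
  (2:ℝ) ^ (-α - β + 1) *
    ∫ x in (-1:ℝ)..1, (jacobiP n (α - 1/2) (β - 1/2) x) ^ 2 *
      (1 - x) ^ (α - 1/2) * (1 + x) ^ (β - 1/2)


noncomputable def cJ (n : ℕ) (a b : ℝ) (k : ℕ) : ℝ :=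
  genBinom ((n : ℝ) + a) ((n : ℝ) - (k : ℝ)) * genBinom ((n : ℝ) + b) (k : ℝ)

lemma cJ_L1 (n k : ℕ) (hk : k ≤ n) (a b : ℝ) (ha : -1 < a) (hb : -1 < b) :
    (a + 1 + k) * cJ n (a+1) (b+1) k = (n + 1 - k) * cJ (n+1) a b k := by
  obtain ⟨l, rfl⟩ := Nat.exists_eq_add_of_le hk
  have hk0 : (0:ℝ) ≤ k := Nat.cast_nonneg k
  have hl0 : (0:ℝ) ≤ l := Nat.cast_nonneg l
  unfold cJ genBinom
  push_cast
  rw [show (k:ℝ) + l + (a+1) + 1 = k + l + 1 + a + 1 by ring,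
    show (k:ℝ) + l + (b+1) + 1 = k + l + 1 + b + 1 by ring,
    show (k:ℝ) + l - k + 1 = l + 1 by ring,
    show (k:ℝ) + l + (a+1) - (k + l - k) + 1 = (a + k + 1) + 1 by ring,
    show (k:ℝ) + l + 1 - k + 1 = (l + 1) + 1 by ring,
    show (k:ℝ) + l + 1 + a - (k + l + 1 - k) + 1 = a + k + 1 by ring,
    show (k:ℝ) + l + (b+1) - k + 1 = l + b + 1 + 1 by ring,
    show (k:ℝ) + l + 1 + b - k + 1 = l + b + 1 + 1 by ring,
    Real.Gamma_add_one (s := a + k + 1) (by linarith),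
    Real.Gamma_add_one (s := (l:ℝ) + 1) (by linarith)]
  have h1 := (Real.Gamma_pos_of_pos (s := a + k + 1) (by linarith)).ne'
  have h2 := (Real.Gamma_pos_of_pos (s := (l:ℝ) + 1) (by linarith)).ne'
  have h3 := (Real.Gamma_pos_of_pos (s := (k:ℝ) + 1) (by linarith)).ne'
  have h4 := (Real.Gamma_pos_of_pos (s := (l:ℝ) + b + 1 + 1) (by linarith)).ne'
  have h5 : a + k + 1 ≠ 0 := by linarith
  have h6 : (l:ℝ) + 1 ≠ 0 := by linarith
  field_simp
  ring

lemma cJ_L2 (n k : ℕ) (hk : k ≤ n) (a b : ℝ) (ha : -1 < a) (hb : -1 < b) :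
    (b + n + 1 - k) * cJ n (a+1) (b+1) k = (k + 1) * cJ (n+1) a b (k+1) := by
  obtain ⟨l, rfl⟩ := Nat.exists_eq_add_of_le hk
  have hk0 : (0:ℝ) ≤ k := Nat.cast_nonneg k
  have hl0 : (0:ℝ) ≤ l := Nat.cast_nonneg l
  unfold cJ genBinom
  push_cast
  rw [show (k:ℝ) + l + (a+1) + 1 = k + l + 1 + a + 1 by ring,
    show (k:ℝ) + l + (b+1) + 1 = k + l + 1 + b + 1 by ring,
    show (k:ℝ) + l - k + 1 = l + 1 by ring,
    show (k:ℝ) + l + (a+1) - (k + l - k) + 1 = (a + k + 1) + 1 by ring,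
    show (k:ℝ) + l + 1 - (k + 1) + 1 = l + 1 by ring,
    show (k:ℝ) + l + 1 + a - (k + l + 1 - (k + 1)) + 1 = a + k + 1 + 1 by ring,
    show (k:ℝ) + l + (b+1) - k + 1 = l + b + 1 + 1 by ring,
    show (k:ℝ) + l + 1 + b - (k + 1) + 1 = l + b + 1 by ring,
    Real.Gamma_add_one (s := (l:ℝ) + b + 1) (by linarith),
    Real.Gamma_add_one (s := (k:ℝ) + 1) (by linarith)]
  have h1 := (Real.Gamma_pos_of_pos (s := a + k + 1 + 1) (by linarith)).ne'
  have h2 := (Real.Gamma_pos_of_pos (s := (l:ℝ) + 1) (by linarith)).ne'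
  have h3 := (Real.Gamma_pos_of_pos (s := (k:ℝ) + 1) (by linarith)).ne'
  have h4 := (Real.Gamma_pos_of_pos (s := (l:ℝ) + b + 1) (by linarith)).ne'
  have h5 : (k:ℝ) + 1 ≠ 0 := by linarith
  have h6 : (l:ℝ) + b + 1 ≠ 0 := by linarith
  field_simp
  ring

lemma jacobiP_eq (n : ℕ) (a b x : ℝ) : jacobiP n a b x =
    ∑ k ∈ Finset.range (n+1), cJ n a b k * (((x - 1) / 2) ^ k * ((x + 1) / 2) ^ (n - k)) := by
  unfold jacobiP cJ
  exact Finset.sum_congr rfl fun k _ => by ring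

noncomputable def dJ (n : ℕ) (a b x : ℝ) : ℝ :=
    ∑ k ∈ Finset.range (n+1), cJ n a b k * ((k * ((x - 1) / 2) ^ (k-1) * ((x + 1) / 2) ^ (n - k)
      + ((n - k : ℕ):ℝ) * ((x - 1) / 2) ^ k * ((x + 1) / 2) ^ (n - k - 1)) / 2)

lemma hasDerivAt_jacobiP' (n : ℕ) (a b x : ℝ) :
    HasDerivAt (jacobiP n a b) (dJ n a b x) x := by
  have : jacobiP n a b = fun x => ∑ k ∈ Finset.range (n+1),
      cJ n a b k * (((x - 1) / 2) ^ k * ((x + 1) / 2) ^ (n - k)) := by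
    ext x; exact jacobiP_eq n a b x
  rw [this]
  unfold dJ
  refine HasDerivAt.fun_sum fun k _ => ?_
  have h1 : HasDerivAt (fun x : ℝ => (x - 1) / 2) (1/2) x :=
    ((hasDerivAt_id x).sub_const 1).div_const 2
  have h2 : HasDerivAt (fun x : ℝ => (x + 1) / 2) (1/2) x :=
    ((hasDerivAt_id x).add_const 1).div_const 2
  refine (((h1.pow k).mul (h2.pow (n-k))).const_mul (cJ n a b k)).congr_deriv ?_
  simp only [Pi.pow_apply]
  ring

lemma dJ_succ (n : ℕ) (a b x : ℝ) (ha : -1 < a) (hb : -1 < b) :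
    dJ (n+1) a b x = (n + 1 + a + b + 1) / 2 * jacobiP n (a+1) (b+1) x := by
  rw [jacobiP_eq]
  unfold dJ
  have e : ∀ k ∈ Finset.range (n+1+1), cJ (n+1) a b k *
      ((k * ((x - 1) / 2) ^ (k-1) * ((x + 1) / 2) ^ (n + 1 - k)
      + ((n + 1 - k : ℕ):ℝ) * ((x - 1) / 2) ^ k * ((x + 1) / 2) ^ (n + 1 - k - 1)) / 2)
      = (k * cJ (n+1) a b k) * (((x - 1) / 2) ^ (k-1) * ((x + 1) / 2) ^ (n + 1 - k)) / 2
      + (((n + 1 - k : ℕ):ℝ) * cJ (n+1) a b k) *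
        (((x - 1) / 2) ^ k * ((x + 1) / 2) ^ (n + 1 - k - 1)) / 2 := by
    intro k _; ring
  rw [Finset.sum_congr rfl e, Finset.sum_add_distrib, Finset.sum_range_succ',
    Finset.sum_range_succ _ (n+1)]
  simp only [Nat.cast_zero, zero_mul, zero_div, add_zero, Nat.sub_self]
  rw [← Finset.sum_add_distrib, Finset.mul_sum]
  refine Finset.sum_congr rfl fun k hk => ?_
  have hk' : k ≤ n := by simpa [Nat.lt_succ_iff] using hk
  have h1 := cJ_L1 n k hk' a b ha hb
  have h2 := cJ_L2 n k hk' a b ha hb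
  have : ((n + 1 - k : ℕ) : ℝ) = n + 1 - k := by push_cast [Nat.cast_sub (by omega : k ≤ n+1)]; ring
  rw [this, ← h1]
  push_cast
  rw [← h2, show n + 1 - k - 1 = n - k by omega]
  ring

lemma jacobiP_E (n : ℕ) (a b x : ℝ) (ha : -1 < a) (hb : -1 < b) :
    ((a+1) * ((x+1)/2) + (b+1) * ((x-1)/2)) * jacobiP n (a+1) (b+1) x
      + 2 * ((x-1)/2) * ((x+1)/2) * dJ n (a+1) (b+1) x = (n+1) * jacobiP (n+1) a b x := by
  rw [jacobiP_eq, jacobiP_eq]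
  unfold dJ
  have e : ∀ k ∈ Finset.range (n+1+1), ((n:ℝ)+1) * (cJ (n+1) a b k *
      (((x - 1) / 2) ^ k * ((x + 1) / 2) ^ (n + 1 - k)))
      = (k * cJ (n+1) a b k) * (((x - 1) / 2) ^ k * ((x + 1) / 2) ^ (n + 1 - k))
      + (((n + 1 - k : ℕ):ℝ) * cJ (n+1) a b k) *
        (((x - 1) / 2) ^ k * ((x + 1) / 2) ^ (n + 1 - k)) := by
    intro k hk
    have hk' : k ≤ n + 1 := by simpa [Nat.lt_succ_iff] using hk
    push_cast [Nat.cast_sub hk']; ring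
  rw [Finset.mul_sum, Finset.mul_sum, ← Finset.sum_add_distrib, Finset.mul_sum,
    Finset.sum_congr rfl e, Finset.sum_add_distrib (s := Finset.range (n+1+1)),
    Finset.sum_range_succ' _ (n+1),
    Finset.sum_range_succ (fun k => (((n + 1 - k : ℕ):ℝ) * cJ (n+1) a b k) *
        (((x - 1) / 2) ^ k * ((x + 1) / 2) ^ (n + 1 - k))) (n+1)]
  simp only [Nat.cast_zero, zero_mul, add_zero, Nat.sub_self]
  rw [← Finset.sum_add_distrib]
  refine Finset.sum_congr rfl fun k hk => ?_
  have hk' : k ≤ n := by simpa [Nat.lt_succ_iff] using hk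
  have h1 := cJ_L1 n k hk' a b ha hb
  have h2 := cJ_L2 n k hk' a b ha hb
  have : ((n + 1 - k : ℕ) : ℝ) = n + 1 - k := by push_cast [Nat.cast_sub (by omega : k ≤ n+1)]; ring
  rw [this, ← h1]
  push_cast
  rw [← h2]
  obtain ⟨l, rfl⟩ := Nat.exists_eq_add_of_le hk'
  rw [show k + l + 1 - k = l + 1 by omega,
    show k + l - k = l by omega]
  push_cast
  rcases k with _ | k <;> rcases l with _ | l <;> simp <;> ring

lemma jacobiP_one (n : ℕ) (a b : ℝ) (hb : -1 < b) :
    jacobiP n a b 1 = Real.Gamma (n + a + 1) / (n.factorial * Real.Gamma (a + 1)) := by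
  rw [jacobiP_eq, Finset.sum_range_succ', Finset.sum_eq_zero]
  · have h4 := (Real.Gamma_pos_of_pos (s := (n:ℝ) + b + 1) (by
      have : (0:ℝ) ≤ n := Nat.cast_nonneg n
      linarith)).ne'
    simp [cJ, genBinom, Real.Gamma_nat_eq_factorial, div_self h4]
  · intro k _; simp

noncomputable def pJ (α β n : ℕ) (θ : ℝ) : ℝ :=
  jacobiP n ((α:ℝ) - 1/2) ((β:ℝ) - 1/2) (Real.cos θ)

lemma neg_one_lt_half (α : ℕ) : (-1:ℝ) < (α:ℝ) - 1/2 := by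
  have : (0:ℝ) ≤ α := Nat.cast_nonneg α
  linarith

lemma sin_eq_half (θ : ℝ) : Real.sin θ = 2 * Real.sin (θ/2) * Real.cos (θ/2) := by
  rw [← Real.sin_two_mul]; congr 1; ring

lemma cos_eq_half (θ : ℝ) : Real.cos θ = 2 * Real.cos (θ/2) ^ 2 - 1 := by
  rw [← Real.cos_two_mul]; congr 1; ring

lemma hasDerivAt_sinh2 (θ : ℝ) :
    HasDerivAt (fun θ : ℝ => Real.sin (θ/2)) (Real.cos (θ/2) / 2) θ := by
  have := (Real.hasDerivAt_sin (θ/2)).comp θ ((hasDerivAt_id θ).div_const 2)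
  refine this.congr_deriv ?_
  ring

lemma hasDerivAt_cosh2 (θ : ℝ) :
    HasDerivAt (fun θ : ℝ => Real.cos (θ/2)) (-Real.sin (θ/2) / 2) θ := by
  have := (Real.hasDerivAt_cos (θ/2)).comp θ ((hasDerivAt_id θ).div_const 2)
  refine this.congr_deriv ?_
  ring

lemma pJ_zero (α β : ℕ) (θ : ℝ) : pJ α β 0 θ = 1 := by
  have h1 := (Real.Gamma_pos_of_pos (s := (α:ℝ) - 1/2 + 1)
    (by linarith [neg_one_lt_half α])).ne'
  have h2 := (Real.Gamma_pos_of_pos (s := (β:ℝ) - 1/2 + 1)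
    (by linarith [neg_one_lt_half β])).ne'
  unfold pJ jacobiP genBinom
  simp only [zero_add, Finset.range_one, Finset.sum_singleton, Nat.cast_zero, sub_zero,
    Real.Gamma_one, one_mul, pow_zero, mul_one, Nat.sub_self]
  rw [div_self h1, div_self h2, one_mul]

lemma pJ_hasDerivAt_dJ (α β n : ℕ) (θ : ℝ) : HasDerivAt (pJ α β n)
    (dJ n ((α:ℝ) - 1/2) ((β:ℝ) - 1/2) (Real.cos θ) * (-Real.sin θ)) θ :=
  (hasDerivAt_jacobiP' n _ _ (Real.cos θ)).comp θ (Real.hasDerivAt_cos θ)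

lemma pJ_continuous (α β n : ℕ) : Continuous (pJ α β n) :=
  continuous_iff_continuousAt.2 fun θ => (pJ_hasDerivAt_dJ α β n θ).continuousAt

lemma pJ_hasDerivAt (α β n : ℕ) (θ : ℝ) : HasDerivAt (pJ α β (n+1))
    (-(n + 1 + α + β) * (Real.sin (θ/2) * Real.cos (θ/2)) * pJ (α+1) (β+1) n θ) θ := by
  refine (pJ_hasDerivAt_dJ α β (n+1) θ).congr_deriv ?_
  rw [dJ_succ _ _ _ _ (neg_one_lt_half α) (neg_one_lt_half β), sin_eq_half]
  unfold pJ
  push_cast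
  rw [show (α:ℝ) - 1/2 + 1 = α + 1 - 1/2 by ring, show (β:ℝ) - 1/2 + 1 = β + 1 - 1/2 by ring]
  ring

lemma pJ_E (α β n : ℕ) (θ : ℝ) : ∃ D, HasDerivAt (pJ (α+1) (β+1) n) D θ ∧
    (((α:ℝ) + 1/2) * Real.cos (θ/2) ^ 2 - ((β:ℝ) + 1/2) * Real.sin (θ/2) ^ 2) *
      pJ (α+1) (β+1) n θ + Real.sin (θ/2) * Real.cos (θ/2) * D = (n+1) * pJ α β (n+1) θ := by
  refine ⟨_, pJ_hasDerivAt_dJ (α+1) (β+1) n θ, ?_⟩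
  have h := jacobiP_E n _ _ (Real.cos θ) (neg_one_lt_half α) (neg_one_lt_half β)
  rw [show (α:ℝ) - 1/2 + 1 = α + 1 - 1/2 by ring, show (β:ℝ) - 1/2 + 1 = β + 1 - 1/2 by ring] at h
  have hc : Real.cos (θ/2) ^ 2 = (Real.cos θ + 1) / 2 := by rw [cos_eq_half θ]; ring
  have hs : Real.sin (θ/2) ^ 2 = - ((Real.cos θ - 1) / 2) := by
    rw [Real.sin_sq, hc]; ring
  unfold pJ
  rw [← h, sin_eq_half θ, ← hc, show (Real.cos θ - 1) / 2 = - Real.sin (θ/2) ^ 2 by rw [hs]; ring]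
  push_cast
  ring

lemma X_hasDerivAt (α β n m A B : ℕ) (hA : A + m = 2 * α) (hB : B + m = 2 * β) (θ : ℝ) :
    HasDerivAt (fun θ => Real.sin (θ/2) ^ (A+1) * Real.cos (θ/2) ^ (B+1) * pJ (α+1) (β+1) n θ)
      (((n:ℝ)+1) * (Real.sin (θ/2) ^ A * Real.cos (θ/2) ^ B * pJ α β (n+1) θ)
        - m / 2 * (Real.cos (θ/2) ^ 2 - Real.sin (θ/2) ^ 2) *
          (Real.sin (θ/2) ^ A * Real.cos (θ/2) ^ B * pJ (α+1) (β+1) n θ)) θ := by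
  obtain ⟨D, hD, hE⟩ := pJ_E α β n θ
  refine ((((hasDerivAt_sinh2 θ).fun_pow (A+1)).fun_mul
    ((hasDerivAt_cosh2 θ).fun_pow (B+1))).fun_mul hD).congr_deriv ?_
  have hA' : (A:ℝ) = 2 * α - m := by
    have : ((A + m : ℕ):ℝ) = ((2 * α : ℕ):ℝ) := by rw [hA]
    push_cast at this; linarith
  have hB' : (B:ℝ) = 2 * β - m := by
    have : ((B + m : ℕ):ℝ) = ((2 * β : ℕ):ℝ) := by rw [hB]
    push_cast at this; linarith
  simp only [Nat.add_sub_cancel]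
  push_cast
  rw [hA', hB']
  linear_combination (Real.sin (θ/2) ^ A * Real.cos (θ/2) ^ B) * hE

/-- inner products -/
noncomputable def MJ (α β m n : ℕ) : ℝ :=
  ∫ θ in (0:ℝ)..π, pJ α β m θ * pJ α β n θ *
    (Real.sin (θ/2) ^ (2*α) * Real.cos (θ/2) ^ (2*β))

lemma cont_s : Continuous fun θ : ℝ => Real.sin (θ/2) := by fun_prop
lemma cont_c : Continuous fun θ : ℝ => Real.cos (θ/2) := by fun_prop

lemma MJ_zero_succ (α β n : ℕ) : MJ α β 0 (n+1) = 0 := by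
  have h := intervalIntegral.integral_eq_sub_of_hasDerivAt (a := 0) (b := π)
    (fun θ _ => X_hasDerivAt α β n 0 (2*α) (2*β) rfl rfl θ) (by
      apply Continuous.intervalIntegrable
      have := pJ_continuous α β (n+1)
      have := pJ_continuous (α+1) (β+1) n
      fun_prop)
  simp only [zero_div, Real.sin_zero, Real.cos_pi_div_two, pow_succ, mul_zero, zero_mul,
    sub_zero, Nat.cast_zero, intervalIntegral.integral_const_mul] at h
  unfold MJ
  simp only [pJ_zero, one_mul]
  have h2 : ((n:ℝ)+1) ≠ 0 := by positivity
  have := (mul_eq_zero.1 h).resolve_left h2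
  rw [← this]
  congr 1; ext θ; ring

lemma MJ_succ_succ (α β m n : ℕ) :
    ((n:ℝ)+1) * MJ α β (m+1) (n+1) = (m + 1 + α + β) * MJ (α+1) (β+1) m n := by
  have c1 := pJ_continuous α β (n+1)
  have c2 := pJ_continuous (α+1) (β+1) n
  have c3 := pJ_continuous α β (m+1)
  have c4 := pJ_continuous (α+1) (β+1) m
  have h := intervalIntegral.integral_eq_sub_of_hasDerivAt (a := 0) (b := π)
    (fun θ _ => (pJ_hasDerivAt α β m θ).fun_mul (X_hasDerivAt α β n 0 (2*α) (2*β) rfl rfl θ)) (by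
      apply Continuous.intervalIntegrable
      fun_prop)
  simp only [zero_div, Real.sin_zero, Real.cos_pi_div_two, pow_succ, mul_zero, zero_mul,
    sub_zero, Nat.cast_zero] at h
  unfold MJ
  rw [← intervalIntegral.integral_const_mul, ← intervalIntegral.integral_const_mul,
    ← sub_eq_zero, ← intervalIntegral.integral_sub, ← h]
  · congr 1; ext θ; ring
  · apply Continuous.intervalIntegrable; fun_prop
  · apply Continuous.intervalIntegrable; fun_prop

lemma MJ_lt (m : ℕ) : ∀ α β n, m < n → MJ α β m n = 0 := by
  induction m with
  | zero =>
    intro α β n hn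
    obtain ⟨k, rfl⟩ := Nat.exists_eq_succ_of_ne_zero hn.ne'
    exact MJ_zero_succ α β k
  | succ m ih =>
    intro α β n hn
    obtain ⟨k, rfl⟩ := Nat.exists_eq_succ_of_ne_zero (Nat.ne_zero_of_lt hn)
    have h := MJ_succ_succ α β m k
    rw [ih _ _ k (by omega), mul_zero] at h
    exact (mul_eq_zero.1 h).resolve_left (by positivity)

lemma MJ_symm (α β m n : ℕ) : MJ α β m n = MJ α β n m := by
  unfold MJ; congr 1; ext θ; ring

lemma MJ_ne (α β m n : ℕ) (h : m ≠ n) : MJ α β m n = 0 := by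
  rcases lt_or_gt_of_ne h with h | h
  · exact MJ_lt m α β n h
  · rw [MJ_symm]; exact MJ_lt n α β m h

lemma s_pos {θ : ℝ} (h : θ ∈ Set.Ioo (0:ℝ) π) : 0 < Real.sin (θ/2) :=
  Real.sin_pos_of_pos_of_lt_pi (by linarith [h.1]) (by linarith [h.1, h.2])
lemma c_pos {θ : ℝ} (h : θ ∈ Set.Ioo (0:ℝ) π) : 0 < Real.cos (θ/2) :=
  Real.cos_pos_of_mem_Ioo ⟨by linarith [h.1, Real.pi_pos], by linarith [h.2]⟩

lemma MJ_zero_zero_pos (α β : ℕ) : 0 < MJ α β 0 0 := by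
  unfold MJ
  simp only [pJ_zero, one_mul]
  refine intervalIntegral.intervalIntegral_pos_of_pos_on ?_ ?_ Real.pi_pos
  · apply Continuous.intervalIntegrable; fun_prop
  · intro θ hθ
    have := s_pos hθ
    have := c_pos hθ
    positivity

lemma MJ_pos (n : ℕ) : ∀ α β, 0 < MJ α β n n := by
  induction n with
  | zero => exact MJ_zero_zero_pos
  | succ n ih =>
    intro α β
    have h := MJ_succ_succ α β n n
    have h1 := ih (α+1) (β+1)
    have : 0 < ((n:ℝ)+1) * MJ α β (n+1) (n+1) := by rw [h]; positivity
    exact pos_of_mul_pos_right this (by positivity)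

lemma MJ_mono (α β n : ℕ) : MJ (α+1) (β+1) n n ≤ MJ α β (n+1) (n+1) := by
  have h := MJ_succ_succ α β n n
  have h1 := MJ_pos n (α+1) (β+1)
  have h3 : (0:ℝ) ≤ ((α:ℝ) + β) * MJ (α+1) (β+1) n n := by positivity
  have : ((n:ℝ)+1) * MJ (α+1) (β+1) n n ≤ ((n:ℝ)+1) * MJ α β (n+1) (n+1) := by
    rw [h]; nlinarith
  exact le_of_mul_le_mul_left this (by positivity)

lemma MJ_zero_add (α β : ℕ) : MJ (α+1) β 0 0 + MJ α (β+1) 0 0 = MJ α β 0 0 := by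
  unfold MJ
  simp only [pJ_zero, one_mul]
  rw [← intervalIntegral.integral_add]
  · congr 1; ext θ
    have := Real.sin_sq_add_cos_sq (θ/2)
    linear_combination (Real.sin (θ/2) ^ (2*α) * Real.cos (θ/2) ^ (2*β)) * this
  · apply Continuous.intervalIntegrable; fun_prop
  · apply Continuous.intervalIntegrable; fun_prop

lemma MJ_zero_ibp (α β : ℕ) :
    (2*(α:ℝ)+1) * MJ α (β+1) 0 0 = (2*(β:ℝ)+1) * MJ (α+1) β 0 0 := by
  have h := intervalIntegral.integral_eq_sub_of_hasDerivAt (a := 0) (b := π)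
    (fun θ _ => ((hasDerivAt_sinh2 θ).fun_pow (2*α+1)).fun_mul
    ((hasDerivAt_cosh2 θ).fun_pow (2*β+1))) (by
      apply Continuous.intervalIntegrable
      fun_prop)
  simp only [zero_div, Real.sin_zero, Real.cos_pi_div_two, pow_succ, mul_zero, zero_mul,
    sub_zero, Nat.add_sub_cancel] at h
  unfold MJ
  simp only [pJ_zero, one_mul]
  rw [← intervalIntegral.integral_const_mul, ← intervalIntegral.integral_const_mul,
    ← sub_eq_zero, ← intervalIntegral.integral_sub]
  · have h' := congrArg (fun z => 2 * z) h
    simp only [mul_zero, ← intervalIntegral.integral_const_mul] at h'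
    rw [← h']
    congr 1; ext θ; push_cast; ring
  · apply Continuous.intervalIntegrable; fun_prop
  · apply Continuous.intervalIntegrable; fun_prop

lemma MJ_zero_a (α β : ℕ) : ((α:ℝ)+β+1) * MJ (α+1) β 0 0 = ((α:ℝ)+1/2) * MJ α β 0 0 := by
  have h1 := MJ_zero_add α β
  have h2 := MJ_zero_ibp α β
  linear_combination (-1/2) * h2 + ((α:ℝ)+1/2) * h1

lemma MJ_zero_b (α β : ℕ) : ((α:ℝ)+β+1) * MJ α (β+1) 0 0 = ((β:ℝ)+1/2) * MJ α β 0 0 := by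
  have h1 := MJ_zero_add α β
  have h2 := MJ_zero_ibp α β
  linear_combination (1/2) * h2 + ((β:ℝ)+1/2) * h1

lemma Gamma_half_succ (x : ℕ) :
    Real.Gamma ((x:ℝ) + 1 + 1/2) = ((x:ℝ) + 1/2) * Real.Gamma ((x:ℝ) + 1/2) := by
  rw [← Real.Gamma_add_one (by positivity)]; congr 1; ring

lemma MJ_zero_formula (α β : ℕ) :
    ((α+β).factorial : ℝ) * MJ α β 0 0 = Real.Gamma ((α:ℝ) + 1/2) * Real.Gamma ((β:ℝ) + 1/2) := by
  induction α with
  | zero =>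
    induction β with
    | zero =>
      simp [MJ, pJ_zero, -one_div, Real.Gamma_one_half_eq, Real.mul_self_sqrt Real.pi_pos.le]
    | succ β ih =>
      have := MJ_zero_b 0 β
      rw [show 0 + (β+1) = (0+β)+1 by ring, Nat.factorial_succ]
      push_cast at this ih ⊢
      rw [Gamma_half_succ β]
      linear_combination ((0+β).factorial:ℝ) * this + ((β:ℝ)+1/2) * ih
  | succ α ih =>
      have := MJ_zero_a α β
      rw [show α + 1 + β = (α+β)+1 by ring, Nat.factorial_succ]
      push_cast at this ih ⊢
      rw [Gamma_half_succ α]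
      linear_combination ((α+β).factorial:ℝ) * this + ((α:ℝ)+1/2) * ih

lemma MJ_formula (n : ℕ) : ∀ α β : ℕ,
    (2*(n:ℝ)+(α+β)) * (n.factorial * (n+(α+β)).factorial) * MJ α β n n =
      ((n:ℝ)+(α+β)) * (Real.Gamma ((n:ℝ) + α + 1/2) * Real.Gamma ((n:ℝ) + β + 1/2)) := by
  induction n with
  | zero =>
    intro α β
    have := MJ_zero_formula α β
    simp only [Nat.cast_zero, zero_add, mul_zero, Nat.factorial_zero, Nat.cast_one, one_mul]
    rw [← this]; ring
  | succ n ih =>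
    intro α β
    have h := ih (α+1) (β+1)
    have h1 := MJ_succ_succ α β n n
    rw [show n + (α+1+(β+1)) = (n+1+(α+β))+1 by ring, Nat.factorial_succ] at h
    rw [Nat.factorial_succ n]
    push_cast at h ⊢
    rw [show (n:ℝ) + (α+1) + 1/2 = n + 1 + α + 1/2 by ring,
      show (n:ℝ) + (β+1) + 1/2 = n + 1 + β + 1/2 by ring] at h
    have h3 : ((n:ℝ) + 1 + (α+β) + 1) ≠ 0 := by positivity
    have h4 : (2*((n:ℝ)+1)+(α+β)) * (n.factorial * (n+1+(α+β)).factorial) * MJ (α+1) (β+1) n n =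
      (Real.Gamma ((n:ℝ) + 1 + α + 1/2) * Real.Gamma ((n:ℝ) + 1 + β + 1/2)) := by
      apply mul_left_cancel₀ h3
      linear_combination h
    rw [← h4]
    linear_combination (2*((n:ℝ)+1)+(α+β)) * (n.factorial * (n+1+(α+β)).factorial) * h1

lemma gamma_bound (α β : ℕ) : ∃ C : ℝ, 0 < C ∧ ∀ n : ℕ,
    ((n+(α+β)).factorial : ℝ) * Real.Gamma ((n:ℝ) + α + 1/2) ≤
      C * ((n:ℝ)+1)^(2*α) * (n.factorial * Real.Gamma ((n:ℝ) + β + 1/2)) := by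
  induction α with
  | zero =>
    induction β with
    | zero => exact ⟨1, one_pos, fun n => by simp⟩
    | succ β ih =>
      obtain ⟨C, hC, h⟩ := ih
      refine ⟨C * (2 * (β+2)), by positivity, fun n => ?_⟩
      have g1 := Real.Gamma_pos_of_pos (s := (n:ℝ) + β + 1/2) (by positivity)
      have h0 := h n
      rw [show n + (0 + (β+1)) = n + (0+β) + 1 by ring, Nat.factorial_succ]
      have e := Gamma_half_succ (n+β)
      push_cast at h0 e ⊢
      rw [show (n:ℝ) + (β+1) + 1/2 = n + β + 1 + 1/2 by ring, e]
      simp only [pow_zero, mul_one] at h0 ⊢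
      have hn : (0:ℝ) ≤ n := Nat.cast_nonneg n
      have hb : (0:ℝ) ≤ β := Nat.cast_nonneg β
      calc ((n:ℝ) + (0 + β) + 1) * ((n+(0+β)).factorial) * Real.Gamma (n + 0 + 1/2)
          = ((n:ℝ) + (0 + β) + 1) * (((n+(0+β)).factorial) * Real.Gamma (n + 0 + 1/2)) := by ring
        _ ≤ (2 * (β+2) * ((n:ℝ) + β + 1/2)) * (C * (n.factorial * Real.Gamma (n + β + 1/2))) := by
            gcongr
            nlinarith
        _ = _ := by ring
  | succ α ih =>
      obtain ⟨C, hC, h⟩ := ih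
      refine ⟨C * ((α + β + 1) * (α+1)), by positivity, fun n => ?_⟩
      have g1 := Real.Gamma_pos_of_pos (s := (n:ℝ) + β + 1/2) (by positivity)
      have g2 := Real.Gamma_pos_of_pos (s := (n:ℝ) + α + 1/2) (by positivity)
      have h0 := h n
      rw [show n + (α + 1 + β) = n + (α+β) + 1 by ring, Nat.factorial_succ]
      have e := Gamma_half_succ (n+α)
      push_cast at h0 e ⊢
      rw [show (n:ℝ) + (α+1) + 1/2 = n + α + 1 + 1/2 by ring, e]
      have hn : (0:ℝ) ≤ n := Nat.cast_nonneg n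
      have hb : (0:ℝ) ≤ β := Nat.cast_nonneg β
      have ha : (0:ℝ) ≤ α := Nat.cast_nonneg α
      calc ((n:ℝ) + (α + β) + 1) * ((n+(α+β)).factorial) *
            (((n:ℝ) + α + 1/2) * Real.Gamma (n + α + 1/2))
          = (((n:ℝ) + (α + β) + 1) * ((n:ℝ) + α + 1/2)) *
            (((n+(α+β)).factorial) * Real.Gamma (n + α + 1/2)) := by ring
        _ ≤ (((α + β + 1) * ((n:ℝ)+1)) * ((α+1) * ((n:ℝ)+1))) *
            (C * ((n:ℝ)+1)^(2*α) * (n.factorial * Real.Gamma (n + β + 1/2))) := by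
            gcongr
            · nlinarith
            · nlinarith
        _ = _ := by ring

lemma P_one_bound (α β : ℕ) (hαβ : 0 < max α β) : ∃ C : ℝ, 0 < C ∧ ∀ n : ℕ,
    jacobiP n ((α:ℝ) - 1/2) ((β:ℝ) - 1/2) 1 ^ 2 / MJ α β n n ≤ C * ((n:ℝ)+1)^(2*α) := by
  obtain ⟨C, hC, h⟩ := gamma_bound α β
  have g0 := Real.Gamma_pos_of_pos (s := (α:ℝ) + 1/2) (by positivity)
  refine ⟨2 * C / Real.Gamma ((α:ℝ) + 1/2) ^ 2, by positivity, fun n => ?_⟩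
  have hσ : (1:ℝ) ≤ (α:ℝ) + β := by
    have : 1 ≤ α + β := by omega
    exact_mod_cast this
  have hn : (0:ℝ) ≤ n := Nat.cast_nonneg n
  have g1 := Real.Gamma_pos_of_pos (s := (n:ℝ) + β + 1/2) (by positivity)
  have g2 := Real.Gamma_pos_of_pos (s := (n:ℝ) + α + 1/2) (by positivity)
  have hM := MJ_formula n α β
  have hMp := MJ_pos n α β
  have h0 := h n
  rw [jacobiP_one n _ _ (neg_one_lt_half β),
    show (n:ℝ) + (α - 1/2) + 1 = n + α + 1/2 by ring, show (α:ℝ) - 1/2 + 1 = α + 1/2 by ring]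
  set G0 := Real.Gamma ((α:ℝ) + 1/2)
  set G1 := Real.Gamma ((n:ℝ) + β + 1/2)
  set G2 := Real.Gamma ((n:ℝ) + α + 1/2)
  set f1 := (n.factorial : ℝ) with hf1
  set f2 := ((n+(α+β)).factorial : ℝ) with hf2
  have pf1 : 0 < f1 := by positivity
  have pf2 : 0 < f2 := by positivity
  have e : MJ α β n n = ((n:ℝ)+(α+β)) * (G2 * G1) / ((2*(n:ℝ)+(α+β)) * (f1 * f2)) := by
    rw [eq_div_iff (by positivity), ← hM]; ring
  have p3 : 0 < (n:ℝ) + (α+β) := by linarith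
  have e2 : (G2 / (f1 * G0)) ^ 2 / MJ α β n n
      = ((2*(n:ℝ)+(α+β)) / ((n:ℝ)+(α+β))) * ((f2 * G2) / (f1 * G1)) / G0^2 := by
    rw [e]; field_simp
  rw [e2]
  have b1 : (2*(n:ℝ)+(α+β)) / ((n:ℝ)+(α+β)) ≤ 2 := by
    rw [div_le_iff₀ p3]; linarith
  have b2 : (f2 * G2) / (f1 * G1) ≤ C * ((n:ℝ)+1)^(2*α) := by
    rw [div_le_iff₀ (by positivity)]; exact h0
  calc _ ≤ 2 * (C * ((n:ℝ)+1)^(2*α)) / G0^2 := by gcongr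
    _ = _ := by ring

lemma cos_image : Real.cos '' Set.Ioo (0:ℝ) π = Set.Ioo (-1:ℝ) 1 := by
  ext x
  constructor
  · rintro ⟨θ, hθ, rfl⟩
    have h1 : Real.cos π < Real.cos θ := Real.cos_lt_cos_of_nonneg_of_le_pi hθ.1.le le_rfl hθ.2
    have h2 : Real.cos θ < Real.cos 0 := Real.cos_lt_cos_of_nonneg_of_le_pi le_rfl hθ.2.le hθ.1
    rw [Real.cos_pi] at h1
    rw [Real.cos_zero] at h2
    exact ⟨h1, h2⟩
  · intro hx
    refine ⟨Real.arccos x, ⟨Real.arccos_pos.2 hx.2, ?_⟩, Real.cos_arccos hx.1.le hx.2.le⟩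
    refine lt_of_le_of_ne (Real.arccos_le_pi x) fun h => ?_
    rw [Real.arccos_eq_pi] at h
    linarith [hx.1]

lemma weight_point (α β : ℕ) (θ : ℝ) (hθ : θ ∈ Set.Ioo (0:ℝ) π) :
    Real.sin θ * ((1 - Real.cos θ) ^ ((α:ℝ) - 1/2) * (1 + Real.cos θ) ^ ((β:ℝ) - 1/2)) =
      2 ^ (α + β) * (Real.sin (θ/2) ^ (2*α) * Real.cos (θ/2) ^ (2*β)) := by
  have hs := s_pos hθ
  have hc := c_pos hθ
  have e1 : 1 + Real.cos θ = 2 * Real.cos (θ/2) ^ 2 := by rw [cos_eq_half θ]; ring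
  have e2 : 1 - Real.cos θ = 2 * Real.sin (θ/2) ^ 2 := by
    rw [cos_eq_half θ, Real.sin_sq]; ring
  rw [e1, e2, Real.rpow_sub (by positivity), Real.rpow_sub (by positivity), ← Real.sqrt_eq_rpow,
    ← Real.sqrt_eq_rpow, Real.rpow_natCast, Real.rpow_natCast, Real.sqrt_mul (by norm_num),
    Real.sqrt_mul (by norm_num), Real.sqrt_sq hs.le, Real.sqrt_sq hc.le, sin_eq_half θ]
  have h2 : Real.sqrt 2 ≠ 0 := by positivity
  have h3 : Real.sqrt 2 ^ 2 = 2 := Real.sq_sqrt (by norm_num)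
  rw [mul_pow, mul_pow, ← pow_mul, ← pow_mul]
  field_simp
  rw [h3]
  ring

lemma hJ_eq (α β n : ℕ) : hJ n (α:ℝ) (β:ℝ) = 2 * MJ α β n n := by
  unfold hJ
  have key : (∫ x in (-1:ℝ)..1, (jacobiP n ((α:ℝ) - 1/2) ((β:ℝ) - 1/2) x) ^ 2 *
      (1 - x) ^ ((α:ℝ) - 1/2) * (1 + x) ^ ((β:ℝ) - 1/2)) = 2 ^ (α + β) * MJ α β n n := by
    rw [intervalIntegral.integral_of_le (by norm_num), integral_Ioc_eq_integral_Ioo,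
      ← cos_image, integral_image_eq_integral_abs_deriv_smul measurableSet_Ioo
        (fun x _ => (Real.hasDerivAt_cos x).hasDerivWithinAt)
        (Real.injOn_cos.mono Set.Ioo_subset_Icc_self)]
    unfold MJ
    rw [← intervalIntegral.integral_const_mul, intervalIntegral.integral_of_le Real.pi_pos.le,
      integral_Ioc_eq_integral_Ioo]
    refine setIntegral_congr_fun measurableSet_Ioo fun θ hθ => ?_
    have h := weight_point α β θ hθ
    have hs : 0 < Real.sin θ := Real.sin_pos_of_pos_of_lt_pi hθ.1 hθ.2
    simp only [abs_neg, abs_of_pos hs, smul_eq_mul]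
    unfold pJ
    linear_combination (jacobiP n ((α:ℝ) - 1/2) ((β:ℝ) - 1/2) (Real.cos θ)) ^ 2 * h
  rw [key, show -(α:ℝ) - β + 1 = 1 - ((α + β : ℕ):ℝ) by push_cast; ring,
    Real.rpow_sub (by norm_num), Real.rpow_natCast, Real.rpow_one]
  have : (2:ℝ) ^ (α + β) ≠ 0 := by positivity
  field_simp

lemma bessel_aux {Ω : Type*} [MeasurableSpace Ω] (μ : Measure Ω) (u : Ω → ℝ) (e : ℕ → Ω → ℝ)
    (hu : MemLp u 2 μ) (he : ∀ n, MemLp (e n) 2 μ) (H : ℕ → ℝ) (hp : ∀ n, 0 < H n)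
    (hH : ∀ n, ∫ x, e n x * e n x ∂μ = H n)
    (ho : ∀ i j, i ≠ j → ∫ x, e i x * e j x ∂μ = 0) :
    Summable fun n => (∫ x, u x * e n x ∂μ) ^ 2 / H n := by
  have inn : ∀ (f g : Ω → ℝ) (hf : MemLp f 2 μ) (hg : MemLp g 2 μ),
      inner ℝ (hf.toLp f) (hg.toLp g) = ∫ x, g x * f x ∂μ := by
    intro f g hf hg
    rw [L2.inner_def]
    refine integral_congr_ae ?_
    filter_upwards [hf.coeFn_toLp, hg.coeFn_toLp] with x h1 h2
    rw [h1, h2]; simp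
  let v : ℕ → Lp ℝ 2 μ := fun n => (Real.sqrt (H n))⁻¹ • (he n).toLp (e n)
  have hv : Orthonormal ℝ v := by
    rw [orthonormal_iff_ite]
    intro i j
    simp only [v, real_inner_smul_left, real_inner_smul_right, inn]
    split_ifs with h
    · subst h
      rw [hH]
      have h1 := Real.mul_self_sqrt (hp i).le
      have h2 : Real.sqrt (H i) ≠ 0 := (Real.sqrt_pos.2 (hp i)).ne'
      field_simp
      nlinarith
    · rw [ho j i (Ne.symm h)]; simp
  have := hv.inner_products_summable (x := hu.toLp u)
  refine this.congr fun n => ?_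
  simp only [v, real_inner_smul_left, inn, Real.norm_eq_abs, sq_abs]
  rw [mul_pow, inv_pow, Real.sq_sqrt (hp n).le]
  ring

noncomputable def IJ (t e : ℝ) (q : ℝ → ℝ) (A B α β n : ℕ) : ℝ :=
  ∫ θ in (0:ℝ)..t, (t - θ) ^ e * q θ * (Real.sin (θ/2) ^ A * Real.cos (θ/2) ^ B) * pJ α β n θ

lemma jordan_c {θ : ℝ} (h : θ ∈ Set.Ioo (0:ℝ) π) : π - θ ≤ π * Real.cos (θ/2) := by
  have := Real.mul_le_sin (x := (π - θ)/2) (by linarith [h.2]) (by linarith [h.1])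
  rw [show (π - θ)/2 = π/2 - θ/2 by ring, Real.sin_pi_div_two_sub] at this
  have hp := Real.pi_pos
  calc π - θ = π * (2 / π * (π/2 - θ/2)) := by field_simp
    _ ≤ _ := by gcongr

lemma IJ_base (t : ℝ) (ht : t ∈ Set.Ioc (0:ℝ) π) (α β m A B : ℕ) (e : ℝ) (q : ℝ → ℝ)
    (hA : A + m = 2 * α) (hB : B + m = 2 * β) (hm : m ≤ α) (he : 0 ≤ e) (hme : (m:ℝ) ≤ e + β)
    (hq : Continuous q) :
    Summable fun n : ℕ => (IJ t e q A B α β n) ^ 2 / MJ α β n n := by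
  have hpi := Real.pi_pos
  let μ : Measure ℝ := volume.restrict (Set.Ioo 0 π)
  have : IsFiniteMeasure μ := ⟨by simp [μ]⟩
  let g : ℝ → ℝ := fun θ => (t - θ) ^ e * q θ *
    (Real.sin (θ/2) ^ (A - α) * (Real.cos (θ/2) ^ B / Real.cos (θ/2) ^ β))
  let u : ℝ → ℝ := (Set.Ioo 0 t).indicator g
  let E : ℕ → ℝ → ℝ := fun n θ => pJ α β n θ * (Real.sin (θ/2) ^ α * Real.cos (θ/2) ^ β)
  have hEc : ∀ n, Continuous (E n) := fun n => by
    have := pJ_continuous α β n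
    fun_prop
  have hE : ∀ n, MemLp (E n) 2 μ := fun n => by
    obtain ⟨C, hC⟩ := (isCompact_Icc (a := (0:ℝ)) (b := π)).exists_bound_of_continuousOn
      (hEc n).continuousOn
    refine MemLp.of_bound (hEc n).aestronglyMeasurable C ?_
    refine (ae_restrict_iff' measurableSet_Ioo).2 (Filter.Eventually.of_forall fun θ hθ => ?_)
    exact hC θ (Set.Ioo_subset_Icc_self hθ)
  have hu : MemLp u 2 μ := by
    obtain ⟨K, hK⟩ := (isCompact_Icc (a := (0:ℝ)) (b := π)).exists_bound_of_continuousOn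
      hq.continuousOn
    have hmeas : Measurable g := by
      have := hq.measurable
      fun_prop
    refine MemLp.of_bound (hmeas.indicator measurableSet_Ioo).aestronglyMeasurable
      (π ^ e * K) ?_
    refine Filter.Eventually.of_forall fun θ => ?_
    have hK0 : 0 ≤ K := le_trans (norm_nonneg _) (hK 0 ⟨le_rfl, hpi.le⟩)
    by_cases hθ : θ ∈ Set.Ioo 0 t
    · have hθ' : θ ∈ Set.Ioo 0 π := ⟨hθ.1, lt_of_lt_of_le hθ.2 ht.2⟩
      have hs := s_pos hθ'
      have hc := c_pos hθ'
      simp only [u, Set.indicator_of_mem hθ, g]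
      have h1 : 0 < t - θ := by linarith [hθ.2]
      have h2 : (t - θ) ^ e ≤ π ^ e * Real.cos (θ/2) ^ e := by
        rw [← Real.mul_rpow hpi.le hc.le]
        exact Real.rpow_le_rpow h1.le (by linarith [jordan_c hθ', ht.2]) he
      have h3 : Real.cos (θ/2) ^ e * (Real.cos (θ/2) ^ B / Real.cos (θ/2) ^ β) ≤ 1 := by
        rw [← mul_div_assoc, div_le_one (by positivity), ← Real.rpow_natCast, ← Real.rpow_natCast,
          ← Real.rpow_add hc]
        apply Real.rpow_le_rpow_of_exponent_ge hc (Real.cos_le_one _)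
        have : ((B + m : ℕ):ℝ) = ((2 * β : ℕ):ℝ) := by rw [hB]
        push_cast at this; linarith
      have h4 : Real.sin (θ/2) ^ (A-α) ≤ 1 := pow_le_one₀ hs.le (Real.sin_le_one _)
      have h5 := hK θ (Set.Ioo_subset_Icc_self hθ')
      have hte : 0 ≤ (t - θ) ^ e := Real.rpow_nonneg h1.le e
      rw [norm_mul, norm_mul, Real.norm_of_nonneg hte, Real.norm_of_nonneg (by positivity :
        0 ≤ Real.sin (θ/2) ^ (A - α) * (Real.cos (θ/2) ^ B / Real.cos (θ/2) ^ β))]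
      calc (t - θ) ^ e * ‖q θ‖ * (Real.sin (θ/2) ^ (A - α) *
            (Real.cos (θ/2) ^ B / Real.cos (θ/2) ^ β))
          ≤ (π ^ e * Real.cos (θ/2) ^ e) * K * (1 *
            (Real.cos (θ/2) ^ B / Real.cos (θ/2) ^ β)) := by gcongr
        _ = π ^ e * K * (Real.cos (θ/2) ^ e * (Real.cos (θ/2) ^ B / Real.cos (θ/2) ^ β)) := by ring
        _ ≤ π ^ e * K * 1 := by gcongr
        _ = _ := by ring
    · simp only [u, Set.indicator_of_notMem hθ, norm_zero]
      positivity
  have hMJ : ∀ i j, ∫ θ, E i θ * E j θ ∂μ = MJ α β i j := by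
    intro i j
    unfold MJ
    rw [intervalIntegral.integral_of_le hpi.le, integral_Ioc_eq_integral_Ioo]
    refine integral_congr_ae (Filter.Eventually.of_forall fun θ => ?_)
    simp only [E]; ring
  have := bessel_aux μ u E hu hE (fun n => MJ α β n n) (fun n => MJ_pos n α β)
    (fun n => hMJ n n) (fun i j h => by rw [hMJ, MJ_ne _ _ _ _ h])
  refine this.congr fun n => ?_
  congr 2
  have e1 : (fun θ => u θ * E n θ) = (Set.Ioo 0 t).indicator (fun θ => g θ * E n θ) := by
    ext θ
    by_cases hθ : θ ∈ Set.Ioo 0 t <;> simp [u, hθ]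
  rw [e1, setIntegral_indicator measurableSet_Ioo, Set.inter_eq_right.2
    (Set.Ioo_subset_Ioo_right ht.2)]
  unfold IJ
  rw [intervalIntegral.integral_of_le ht.1.le, integral_Ioc_eq_integral_Ioo]
  refine setIntegral_congr_fun measurableSet_Ioo fun θ hθ => ?_
  have hc := c_pos (θ := θ) ⟨hθ.1, lt_of_lt_of_le hθ.2 ht.2⟩
  have hAe : A = (A - α) + α := by omega
  simp only [g, E]
  conv_rhs => rw [hAe, pow_add]
  field_simp

lemma IJ_ibp (t : ℝ) (ht : t ∈ Set.Ioc (0:ℝ) π) (α β m A B n : ℕ) (e : ℝ) (q : ℝ → ℝ)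
    (hA : A + m = 2 * α) (hB : B + m = 2 * β) (he : 1 ≤ e) (hq : ContDiff ℝ (⊤ : ℕ∞) q) :
    ((n:ℝ)+1) * IJ t e q A B α β (n+1) =
      e * IJ t (e-1) q (A+1) (B+1) (α+1) (β+1) n
      - IJ t e (fun θ => deriv q θ * (Real.sin (θ/2) * Real.cos (θ/2))
          - m / 2 * (Real.cos (θ/2) ^ 2 - Real.sin (θ/2) ^ 2) * q θ) A B (α+1) (β+1) n := by
  have c1 := pJ_continuous α β (n+1)
  have c2 := pJ_continuous (α+1) (β+1) n
  have c3 := hq.continuous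
  have c4 : Continuous (deriv q) := hq.continuous_deriv (by simp)
  have c5 : Continuous fun θ : ℝ => (t - θ) ^ e :=
    (Real.continuous_rpow_const (by linarith)).comp (by fun_prop)
  have c6 : Continuous fun θ : ℝ => (t - θ) ^ (e-1) :=
    (Real.continuous_rpow_const (by linarith)).comp (by fun_prop)
  have hd : ∀ θ : ℝ, HasDerivAt (fun θ : ℝ => (t - θ) ^ e) (-(e * (t - θ) ^ (e-1))) θ := by
    intro θ
    have := (Real.hasDerivAt_rpow_const (x := t - θ) (p := e) (Or.inr he)).comp θ
      ((hasDerivAt_id θ).const_sub t)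
    refine this.congr_deriv ?_
    ring
  have h := intervalIntegral.integral_eq_sub_of_hasDerivAt (a := 0) (b := t)
    (fun θ _ => ((hd θ).fun_mul ((hq.differentiable (by simp)) θ).hasDerivAt).fun_mul
      (X_hasDerivAt α β n m A B hA hB θ)) (by
      apply Continuous.intervalIntegrable
      fun_prop)
  have e0 : (0:ℝ) ^ e = 0 := Real.zero_rpow (by linarith)
  simp only [zero_div, Real.sin_zero, pow_succ, mul_zero, zero_mul, sub_self, e0] at h
  unfold IJ
  rw [← intervalIntegral.integral_const_mul, ← intervalIntegral.integral_const_mul,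
    ← intervalIntegral.integral_sub, ← sub_eq_zero, ← intervalIntegral.integral_sub, ← h]
  · congr 1; ext θ; ring
  all_goals apply Continuous.intervalIntegrable; fun_prop

lemma IJ_summable (t : ℝ) (ht : t ∈ Set.Ioc (0:ℝ) π) (r : ℕ) : ∀ (α β m A B : ℕ) (e : ℝ)
    (q : ℝ → ℝ), A + m = 2 * α → B + m = 2 * β → m + r ≤ α → (r:ℝ) ≤ e → (m:ℝ) + r ≤ e + β →
    ContDiff ℝ (⊤ : ℕ∞) q →
    Summable fun n : ℕ => (IJ t e q A B α β (n+r) * ((n:ℝ)+1)^r) ^ 2 / MJ α β (n+r) (n+r) := by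
  induction r with
  | zero =>
    intro α β m A B e q hA hB hm he hme hq
    have := IJ_base t ht α β m A B e q hA hB (by omega) (by simpa using he) (by simpa using hme)
      hq.continuous
    simpa using this
  | succ r ih =>
    intro α β m A B e q hA hB hm he hme hq
    push_cast at he hme
    have hr0 : (0:ℝ) ≤ r := Nat.cast_nonneg r
    have hdq : ContDiff ℝ (⊤ : ℕ∞) (deriv q) :=
      (contDiff_infty_iff_deriv.1 hq).2
    set Q : ℝ → ℝ := fun θ => deriv q θ * (Real.sin (θ/2) * Real.cos (θ/2))
          - m / 2 * (Real.cos (θ/2) ^ 2 - Real.sin (θ/2) ^ 2) * q θ with hQ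
    have hQc : ContDiff ℝ (⊤ : ℕ∞) Q := by
      rw [hQ]
      fun_prop
    have s1 := ih (α+1) (β+1) (m+1) (A+1) (B+1) (e-1) q (by omega) (by omega) (by omega)
      (by linarith) (by push_cast; linarith) hq
    have s2 := ih (α+1) (β+1) (m+2) A B e Q (by omega) (by omega) (by omega)
      (by linarith) (by push_cast; linarith) hQc
    refine Summable.of_nonneg_of_le (fun n => ?_) (fun n => ?_)
      ((s1.mul_left (2 * e^2)).add (s2.mul_left 2))
    · have := MJ_pos (n + (r+1)) α β
      positivity
    · have h := IJ_ibp t ht α β m A B (n+r) e q hA hB (by linarith) hq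
      rw [← hQ] at h
      rw [← add_assoc]
      have hM := MJ_mono α β (n+r)
      have hM1 := MJ_pos (n+r) (α+1) (β+1)
      set I0 := IJ t e q A B α β (n+r+1)
      set I1 := IJ t (e-1) q (A+1) (B+1) (α+1) (β+1) (n+r)
      set I2 := IJ t e Q A B (α+1) (β+1) (n+r)
      push_cast at h
      have k1 : (I0 * ((n:ℝ)+1)^(r+1))^2 ≤ ((e * I1 - I2) * ((n:ℝ)+1)^r)^2 := by
        rw [← h, sq_le_sq, pow_succ, abs_mul, abs_mul, abs_mul, abs_mul]
        rw [abs_of_nonneg (by positivity : (0:ℝ) ≤ (n:ℝ)+1),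
          abs_of_nonneg (by positivity : (0:ℝ) ≤ (n:ℝ)+r+1)]
        calc |I0| * (|((n:ℝ)+1)^r| * ((n:ℝ)+1)) ≤ |I0| * (|((n:ℝ)+1)^r| * ((n:ℝ)+r+1)) := by
              gcongr; linarith
          _ = _ := by ring
      calc (I0 * ((n:ℝ)+1)^(r+1))^2 / MJ α β (n+r+1) (n+r+1)
          ≤ ((e * I1 - I2) * ((n:ℝ)+1)^r)^2 / MJ (α+1) (β+1) (n+r) (n+r) := by gcongr
        _ ≤ (2 * e^2 * (I1 * ((n:ℝ)+1)^r)^2 + 2 * (I2 * ((n:ℝ)+1)^r)^2) /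
              MJ (α+1) (β+1) (n+r) (n+r) := by
            gcongr
            nlinarith [sq_nonneg ((e * I1 + I2) * ((n:ℝ)+1)^r)]
        _ = _ := by ring

lemma FJ_eq (α β n : ℕ) (δ t : ℝ) :
    FJ n (α:ℝ) (β:ℝ) δ t = IJ t δ (fun _ => 1) (2*α) (2*β) α β n := by
  unfold FJ IJ pJ
  congr 1; ext θ
  rw [show 2 * (α:ℝ) = ((2*α:ℕ):ℝ) by push_cast; ring,
    show 2 * (β:ℝ) = ((2*β:ℕ):ℝ) by push_cast; ring, Real.rpow_natCast, Real.rpow_natCast]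
  ring

lemma FJ_summable (t : ℝ) (ht : t ∈ Set.Ioc (0:ℝ) π) (α β : ℕ) (δ : ℝ) (hδ : (α:ℝ) + 1 ≤ δ) :
    Summable fun n : ℕ => (FJ (n+(α+1)) (α:ℝ) (β:ℝ) δ t * ((n:ℝ)+1)^(α+1)) ^ 2 /
      MJ α β (n+(α+1)) (n+(α+1)) := by
  have ha : (0:ℝ) ≤ α := Nat.cast_nonneg α
  have hb : (0:ℝ) ≤ β := Nat.cast_nonneg β
  have s1 := IJ_summable t ht α (α+1) (β+1) 1 (2*α+1) (2*β+1) (δ-1) (fun _ => 1)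
    (by omega) (by omega) (by omega) (by linarith) (by push_cast; linarith) contDiff_const
  refine Summable.of_nonneg_of_le (fun n => ?_) (fun n => ?_) (s1.mul_left (δ^2))
  · have := MJ_pos (n + (α+1)) α β
    positivity
  · have h := IJ_ibp t ht α β 0 (2*α) (2*β) (n+α) δ (fun _ => 1) rfl rfl (by linarith)
      contDiff_const
    have hz : IJ t δ (fun θ => deriv (fun _ : ℝ => (1:ℝ)) θ * (Real.sin (θ/2) * Real.cos (θ/2))
          - ((0:ℕ):ℝ) / 2 * (Real.cos (θ/2) ^ 2 - Real.sin (θ/2) ^ 2) * (fun _ => 1) θ)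
          (2*α) (2*β) (α+1) (β+1) (n+α) = 0 := by
      simp [IJ]
    rw [hz, sub_zero] at h
    rw [FJ_eq, ← add_assoc]
    have hM := MJ_mono α β (n+α)
    have hM1 := MJ_pos (n+α) (α+1) (β+1)
    set I0 := IJ t δ (fun _ => 1) (2*α) (2*β) α β (n+α+1)
    set I1 := IJ t (δ-1) (fun _ => 1) (2*α+1) (2*β+1) (α+1) (β+1) (n+α)
    push_cast at h
    have k1 : (I0 * ((n:ℝ)+1)^(α+1))^2 ≤ ((δ * I1) * ((n:ℝ)+1)^α)^2 := by
      rw [← h, sq_le_sq, pow_succ, abs_mul, abs_mul, abs_mul, abs_mul]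
      rw [abs_of_nonneg (by positivity : (0:ℝ) ≤ (n:ℝ)+1),
        abs_of_nonneg (by positivity : (0:ℝ) ≤ (n:ℝ)+α+1)]
      calc |I0| * (|((n:ℝ)+1)^α| * ((n:ℝ)+1)) ≤ |I0| * (|((n:ℝ)+1)^α| * ((n:ℝ)+α+1)) := by
            gcongr; linarith
        _ = _ := by ring
    calc (I0 * ((n:ℝ)+1)^(α+1))^2 / MJ α β (n+α+1) (n+α+1)
        ≤ ((δ * I1) * ((n:ℝ)+1)^α)^2 / MJ (α+1) (β+1) (n+α) (n+α) := by gcongr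
      _ = _ := by ring

theorem fourierJacobi_converges_at_zero (α β : ℕ) (hαβ : 0 < max α β) (δ : ℝ)
    (hδ : (α : ℝ) + 1 ≤ δ) (t : ℝ) (ht : t ∈ Set.Ioc (0:ℝ) π) :
    ∃ L : ℝ, Filter.Tendsto
      (fun N => ∑ n ∈ Finset.range N,
        FJ n (α : ℝ) (β : ℝ) δ t / hJ n (α : ℝ) (β : ℝ) *
          jacobiP n ((α : ℝ) - 1/2) ((β : ℝ) - 1/2) 1)
      Filter.atTop (nhds L) := by
  suffices h : Summable fun n : ℕ => FJ n (α : ℝ) (β : ℝ) δ t / hJ n (α : ℝ) (β : ℝ) *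
          jacobiP n ((α : ℝ) - 1/2) ((β : ℝ) - 1/2) 1 from ⟨_, h.hasSum.tendsto_sum_nat⟩
  rw [← summable_nat_add_iff (α+1)]
  obtain ⟨C, hC, hP⟩ := P_one_bound α β hαβ
  have s1 := FJ_summable t ht α β δ hδ
  have s2 : Summable fun n : ℕ => C * ((α:ℝ)+2)^(2*α) * (1 / ((n:ℝ)+1)^2) := by
    refine Summable.mul_left _ ?_
    have := (summable_nat_add_iff 1).2 (Real.summable_one_div_nat_pow.2 (by norm_num : 1 < 2))
    simpa using this
  refine Summable.of_norm_bounded (s1.add s2) fun n => ?_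
  rw [hJ_eq]
  have hM := MJ_pos (n+(α+1)) α β
  have hp := hP (n+(α+1))
  set M := MJ α β (n+(α+1)) (n+(α+1))
  set F := FJ (n+(α+1)) (α : ℝ) (β : ℝ) δ t
  set p := jacobiP (n+(α+1)) ((α : ℝ) - 1/2) ((β : ℝ) - 1/2) 1
  have hN : (0:ℝ) < (n:ℝ) + 1 := by positivity
  have b : (p / ((n:ℝ)+1)^(α+1))^2 / M ≤ C * ((α:ℝ)+2)^(2*α) * (1 / ((n:ℝ)+1)^2) := by
    have h1 : (((n+(α+1):ℕ):ℝ)+1) ≤ ((α:ℝ)+2) * ((n:ℝ)+1) := by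
      push_cast
      have : (0:ℝ) ≤ α * n := by positivity
      have : (0:ℝ) ≤ n := by positivity
      nlinarith
    calc (p / ((n:ℝ)+1)^(α+1))^2 / M = (p^2/M) / (((n:ℝ)+1)^(α+1))^2 := by
          field_simp
      _ ≤ (C * (((n+(α+1):ℕ):ℝ)+1)^(2*α)) / (((n:ℝ)+1)^(α+1))^2 := by gcongr
      _ ≤ (C * (((α:ℝ)+2) * ((n:ℝ)+1))^(2*α)) / (((n:ℝ)+1)^(α+1))^2 := by gcongr
      _ = _ := by
          rw [mul_pow, ← pow_mul, show (α+1)*2 = 2*α+2 by ring, pow_add]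
          field_simp
  refine le_trans ?_ (add_le_add le_rfl b)
  set x := F * ((n:ℝ)+1)^(α+1)
  set y := p / ((n:ℝ)+1)^(α+1)
  have e1 : F / (2 * M) * p = x * y / (2 * M) := by
    simp only [x, y]; field_simp
  rw [e1, Real.norm_eq_abs, abs_div, abs_of_pos (by positivity : 0 < 2 * M), ← add_div,
    div_le_div_iff₀ (by positivity) hM]
  have : |x * y| ≤ x^2 + y^2 := by
    rw [abs_le]; constructor <;> nlinarith [sq_nonneg (x+y), sq_nonneg (x-y)]
  nlinarith [abs_nonneg (x*y)]
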